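/- arXiv:2001.09317 — 2 statements merged into one kernel-verified Lean document; each statement's English description precedes it below -/
import Mathlib

section
/- (Lemma 5 of the paper, rearrangement to Schedule B.) Fix reals μ_min and μ* with 0 < μ_min ≤ μ* ≤ 1, let μ : ℤ → ℝ be a schedule (μ_min ≤ μ(s) ≤ μ* for all s), let T ≥ 1 be an integer, and let n = #{t ∈ {1, …, T} : μ(t) ≠ μ*} be the number of slots in {1, …, T} in which a sub-optimal channel is used. Define the Schedule-B function μ_B by μ_B(s) = μ(s) for s ≤ 0, μ_B(s) = μ_min for 1 ≤ s ≤ n, and μ_B(s) = μ* for n+1 ≤ s ≤ T. Then ∑_{t=1}^{T} A_μ(t) ≤ ∑_{t=1}^{T} A_{μ_B}(t). -/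
/-- The expected Age-of-Information at time-slot `t` under a per-slot
success-probability function `μ : ℤ → ℝ`: the series
`A_μ(t) = ∑_{τ=0}^∞ ∏_{i=0}^{τ-1} (1 − μ(t−i))`, where the `τ = 0` term
(the empty product) equals 1. -/
noncomputable def aoi (μ : ℤ → ℝ) (t : ℤ) : ℝ :=
  ∑' τ : ℕ, ∏ i ∈ Finset.range τ, (1 - μ (t - (i : ℤ)))

/-!
The age obeys `A(t + 1) = 1 + q * A(t)`, where `q` is the failure probability of slot `t + 1`, so the
total age over a horizon is an affine function of the initial age `a`, with slope the sum of the
prefix products of the failure probabilities. Moving a best slot, with failure probability `g`, from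
the front of the horizon to its end does not decrease the total age: the slope does not decrease, and
at the fixed point `c = 1 + g * c` of the best channel the moved slot contributes `c` in front and at
least `c` at the end. The age never falls below `c`, so by induction all best slots may be moved to
the end, after which the remaining slots may be replaced by worst ones.
-/

section Semiring

variable {R : Type*} [Semiring R]

/-- The sum of the ages after each slot of a horizon with failure probabilities `l`, when the age
just before the horizon is `a`. The age `a` itself is not counted. -/
def totalAge : List R → R → R
  | [], _ => 0
  | q :: l, a => (1 + q * a) + totalAge l (1 + q * a)

/-- The sum `q₁ + q₁q₂ + ⋯ + q₁⋯qₙ` of the products of the nonempty prefixes of a list, written in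
Horner form. It is the slope of `totalAge` in the initial age. -/
def prefixProdSum : List R → R
  | [] => 0
  | q :: l => q * (1 + prefixProdSum l)

theorem sum_range_eq_totalAge (N : ℕ) (a q : ℕ → R) (ha : ∀ i, a (i + 1) = 1 + q i * a i) :
    ∑ i ∈ Finset.range N, a (i + 1) = totalAge ((List.range N).map q) (a 0) := by
  induction N generalizing a q with
  | zero => rfl
  | succ N ih =>
    rw [Finset.sum_range_succ', add_comm, ih (fun i => a (i + 1)) (fun i => q (i + 1))
      fun i => ha (i + 1), List.range_succ_eq_map, List.map_cons, List.map_map, totalAge, ← ha 0]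
    rfl

end Semiring

theorem map_range_ite_eq_replicate_append {α : Type*} (x y : α) {m N : ℕ} (h : m ≤ N) :
    (List.range N).map (fun i => if i < m then x else y) =
      List.replicate m x ++ List.replicate (N - m) y := by
  refine List.ext_getElem (by simp [h]) fun i _ _ => ?_
  simp [List.getElem_append]

theorem totalAge_add {R : Type*} [CommSemiring R] (l : List R) (a d : R) :
    totalAge l (a + d) = totalAge l a + d * prefixProdSum l := by
  induction l generalizing a d with
  | nil => simp only [totalAge, prefixProdSum, mul_zero, add_zero]
  | cons q l ih =>
    have hstep : 1 + q * (a + d) = (1 + q * a) + q * d := by ring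
    simp only [totalAge, prefixProdSum, hstep, ih]
    ring

section Ordered

variable {R : Type*} [CommRing R] [PartialOrder R] [IsOrderedRing R] {a a' b c g : R} {l : List R}

theorem prefixProdSum_nonneg (hl : ∀ q ∈ l, 0 ≤ q) : 0 ≤ prefixProdSum l := by
  induction l with
  | nil => exact le_rfl
  | cons q l ih =>
    rw [List.forall_mem_cons] at hl
    exact mul_nonneg hl.1 (add_nonneg zero_le_one (ih hl.2))

theorem totalAge_mono (hl : ∀ q ∈ l, 0 ≤ q) (h : a ≤ a') : totalAge l a ≤ totalAge l a' := by
  rw [← add_sub_cancel a a', totalAge_add]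
  exact le_add_of_nonneg_right (mul_nonneg (sub_nonneg.2 h) (prefixProdSum_nonneg hl))

theorem prefixProdSum_cons_le_concat (hg : 0 ≤ g) (hl : ∀ q ∈ l, g ≤ q) :
    prefixProdSum (g :: l) ≤ prefixProdSum (l ++ [g]) := by
  induction l with
  | nil => exact le_rfl
  | cons q l ih =>
    rw [List.forall_mem_cons] at hl
    calc prefixProdSum (g :: q :: l)
        = g + q * prefixProdSum (g :: l) := by simp only [prefixProdSum]; ring
      _ ≤ q + q * prefixProdSum (l ++ [g]) :=
        add_le_add hl.1 (mul_le_mul_of_nonneg_left (ih hl.2) (hg.trans hl.1))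
      _ = prefixProdSum (q :: l ++ [g]) := by simp only [List.cons_append, prefixProdSum]; ring

theorem le_one_add_mul {q : R} (hg : 0 ≤ g) (hc₀ : 0 ≤ c) (hc : c ≤ 1 + g * c) (hq : g ≤ q)
    (ha : c ≤ a) : c ≤ 1 + q * a :=
  calc c ≤ 1 + g * c := hc
    _ ≤ 1 + q * a := add_le_add_right (mul_le_mul hq ha hc₀ (hg.trans hq)) 1

theorem totalAge_add_le_concat (hg : 0 ≤ g) (hc₀ : 0 ≤ c) (hc : c ≤ 1 + g * c)
    (hl : ∀ q ∈ l, g ≤ q) (ha : c ≤ a) : totalAge l a + c ≤ totalAge (l ++ [g]) a := by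
  induction l generalizing a with
  | nil =>
    simpa only [totalAge, List.nil_append, zero_add, add_zero]
      using le_one_add_mul hg hc₀ hc le_rfl ha
  | cons q l ih =>
    rw [List.forall_mem_cons] at hl
    simpa only [totalAge, List.cons_append, add_assoc]
      using add_le_add_right (ih hl.2 (le_one_add_mul hg hc₀ hc hl.1 ha)) (1 + q * a)

theorem totalAge_cons_le_concat (hg : 0 ≤ g) (hc₀ : 0 ≤ c) (hc : 1 + g * c = c)
    (hl : ∀ q ∈ l, g ≤ q) (ha : c ≤ a) : totalAge (g :: l) a ≤ totalAge (l ++ [g]) a := by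
  have at_fixedPoint : totalAge (g :: l) c ≤ totalAge (l ++ [g]) c := by
    rw [totalAge, hc, add_comm]
    exact totalAge_add_le_concat hg hc₀ hc.ge hl le_rfl
  rw [← add_sub_cancel c a, totalAge_add, totalAge_add]
  exact add_le_add at_fixedPoint
    (mul_le_mul_of_nonneg_left (prefixProdSum_cons_le_concat hg hl) (sub_nonneg.2 ha))

theorem totalAge_cons_le_cons {q : R} (ha : 0 ≤ a) (hl : ∀ x ∈ l, 0 ≤ x) (hq : q ≤ b) :
    totalAge (q :: l) a ≤ totalAge (b :: l) a := by
  have hstep : 1 + q * a ≤ 1 + b * a := by gcongr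
  exact add_le_add hstep (totalAge_mono hl hstep)

theorem totalAge_le_replicate_append_replicate [DecidableEq R] (hg : 0 ≤ g) (hgb : g ≤ b)
    (hc₀ : 0 ≤ c) (hc : 1 + g * c = c) (hl : ∀ q ∈ l, g ≤ q ∧ q ≤ b) (ha : c ≤ a) :
    totalAge l a ≤
      totalAge (List.replicate (l.countP (· ≠ g)) b ++ List.replicate (l.count g) g) a := by
  induction l generalizing a with
  | nil => exact le_rfl
  | cons q l ih =>
    rw [List.forall_mem_cons] at hl
    set packed := List.replicate (l.countP (· ≠ g)) b ++ List.replicate (l.count g) g with hpacked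
    have packed_ge : ∀ x ∈ packed, g ≤ x := by
      intro x hx
      rcases List.mem_append.1 hx with hx | hx
      · exact hgb.trans_eq (List.eq_of_mem_replicate hx).symm
      · exact (List.eq_of_mem_replicate hx).ge
    have tail_le : totalAge (q :: l) a ≤ totalAge (q :: packed) a :=
      add_le_add_right (ih hl.2 (le_one_add_mul hg hc₀ hc.ge hl.1.1 ha)) _
    refine tail_le.trans ?_
    by_cases hq : q = g
    · subst hq
      refine (totalAge_cons_le_concat hg hc₀ hc packed_ge ha).trans_eq ?_
      simp [hpacked, List.replicate_succ']
    · refine (totalAge_cons_le_cons (hc₀.trans ha) (fun x hx => hg.trans (packed_ge x hx))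
        hl.1.2).trans_eq ?_
      simp [hpacked, hq, List.replicate_succ]

theorem sum_range_le_sum_range_packed [DecidableEq R] (hg : 0 ≤ g) (hgb : g ≤ b)
    (hc₀ : 0 ≤ c) (hc : 1 + g * c = c) {N : ℕ} {age age' q : ℕ → R} (hq : ∀ i, g ≤ q i ∧ q i ≤ b)
    (hage : ∀ i, age (i + 1) = 1 + q i * age i)
    (hage' : ∀ i, age' (i + 1) =
      1 + (if i < Nat.count (fun j => q j ≠ g) N then b else g) * age' i)
    (h₀ : age' 0 = age 0) (hc_le : c ≤ age 0) :
    ∑ i ∈ Finset.range N, age (i + 1) ≤ ∑ i ∈ Finset.range N, age' (i + 1) := by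
  have count_ne : ((List.range N).map q).countP (· ≠ g) = Nat.count (fun j => q j ≠ g) N :=
    List.countP_map
  have count_eq : ((List.range N).map q).count g = N - Nat.count (fun j => q j ≠ g) N := by
    have length_eq := List.length_eq_countP_add_countP (· == g) (l := (List.range N).map q)
    simp only [beq_iff_eq, List.length_map, List.length_range, count_ne] at length_eq
    exact Nat.eq_sub_of_add_eq length_eq.symm
  rw [sum_range_eq_totalAge N age q hage, sum_range_eq_totalAge N age' _ hage',
    map_range_ite_eq_replicate_append _ _ (Nat.count_le _), h₀, ← count_eq, ← count_ne]
  exact totalAge_le_replicate_append_replicate hg hgb hc₀ hc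
    (List.forall_mem_map.2 fun i _ => hq i) hc_le

end Ordered

theorem summable_prod_range_of_le {q : ℕ → ℝ} {r : ℝ} (hq : ∀ i, 0 ≤ q i) (hqr : ∀ i, q i ≤ r)
    (hr : r < 1) : Summable fun n => ∏ i ∈ Finset.range n, q i := by
  refine Summable.of_nonneg_of_le (fun n => Finset.prod_nonneg fun i _ => hq i) (fun n => ?_)
    (summable_geometric_of_lt_one ((hq 0).trans (hqr 0)) hr)
  simpa only [Finset.prod_const, Finset.card_range]
    using Finset.prod_le_prod (s := Finset.range n) (fun i _ => hq i) fun i _ => hqr i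

section AgeOfInformation

variable {μ ν : ℤ → ℝ} {m : ℝ}

theorem summable_aoi (hm : 0 < m) (hmμ : ∀ s, m ≤ μ s) (hμ : ∀ s, μ s ≤ 1) (t : ℤ) :
    Summable fun τ : ℕ => ∏ i ∈ Finset.range τ, (1 - μ (t - (i : ℤ))) :=
  summable_prod_range_of_le (fun _ => sub_nonneg.2 (hμ _)) (fun _ => sub_le_sub_left (hmμ _) 1)
    (sub_lt_self 1 hm)

theorem aoi_add_one (hm : 0 < m) (hmμ : ∀ s, m ≤ μ s) (hμ : ∀ s, μ s ≤ 1) (t : ℤ) :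
    aoi μ (t + 1) = 1 + (1 - μ (t + 1)) * aoi μ t := by
  have prod_succ (τ : ℕ) : ∏ i ∈ Finset.range (τ + 1), (1 - μ (t + 1 - (i : ℤ))) =
      (1 - μ (t + 1)) * ∏ i ∈ Finset.range τ, (1 - μ (t - (i : ℤ))) := by
    rw [Finset.prod_range_succ', mul_comm]
    simp only [Nat.cast_add, Nat.cast_one, Nat.cast_zero, sub_zero, add_sub_add_right_eq_sub]
  rw [aoi, (summable_aoi hm hmμ hμ (t + 1)).tsum_eq_zero_add, Finset.prod_range_zero]
  simp only [prod_succ, tsum_mul_left, aoi]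

theorem aoi_congr {t : ℤ} (h : ∀ s ≤ t, μ s = ν s) : aoi μ t = aoi ν t :=
  tsum_congr fun _ => Finset.prod_congr rfl fun i _ => by rw [h _ (by omega)]

theorem aoi_const {x : ℝ} (hx₀ : 0 < x) (hx₁ : x ≤ 1) (t : ℤ) : aoi (fun _ => x) t = x⁻¹ := by
  simp only [aoi, Finset.prod_const, Finset.card_range]
  rw [tsum_geometric_of_lt_one (sub_nonneg.2 hx₁) (sub_lt_self 1 hx₀), sub_sub_cancel]

theorem aoi_le_aoi (hm : 0 < m) (hmμ : ∀ s, m ≤ μ s) (hμν : ∀ s, μ s ≤ ν s) (hν : ∀ s, ν s ≤ 1)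
    (t : ℤ) : aoi ν t ≤ aoi μ t :=
  Summable.tsum_le_tsum
    (fun _ => Finset.prod_le_prod (fun _ _ => sub_nonneg.2 (hν _))
      fun _ _ => sub_le_sub_left (hμν _) 1)
    (summable_aoi hm (fun s => (hmμ s).trans (hμν s)) hν t)
    (summable_aoi hm hmμ (fun s => (hμν s).trans (hν s)) t)

theorem inv_le_aoi {x : ℝ} (hm : 0 < m) (hmμ : ∀ s, m ≤ μ s) (hμx : ∀ s, μ s ≤ x) (hx : x ≤ 1)
    (t : ℤ) : x⁻¹ ≤ aoi μ t := by
  have hx₀ : 0 < x := hm.trans_le ((hmμ 0).trans (hμx 0))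
  rw [← aoi_const hx₀ hx t]
  exact aoi_le_aoi hm hmμ hμx (fun _ => hx) t

theorem sum_range_aoi_le_sum_range_aoi_packed {x : ℝ} {N : ℕ} (hm : 0 < m)
    (hμ : ∀ s, m ≤ μ s ∧ μ s ≤ x) (hx : x ≤ 1) (hpast : ∀ s ≤ 0, ν s = μ s)
    (hpacked : ∀ i : ℕ,
      ν (i + 1 : ℕ) = if i < Nat.count (fun j => μ (j + 1 : ℕ) ≠ x) N then m else x) :
    ∑ i ∈ Finset.range N, aoi μ (i + 1 : ℕ) ≤ ∑ i ∈ Finset.range N, aoi ν (i + 1 : ℕ) := by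
  have hmx : m ≤ x := (hμ 0).1.trans (hμ 0).2
  have hx₀ : 0 < x := hm.trans_le hmx
  have hν (s : ℤ) : m ≤ ν s ∧ ν s ≤ x := by
    rcases le_or_gt s 0 with hs | hs
    · exact hpast s hs ▸ hμ s
    · obtain ⟨i, rfl⟩ : ∃ i : ℕ, s = (i + 1 : ℕ) := ⟨(s - 1).toNat, by omega⟩
      rw [hpacked]
      split_ifs
      exacts [⟨le_rfl, hmx⟩, ⟨hmx, le_rfl⟩]
  refine sum_range_le_sum_range_packed (age := fun i => aoi μ i) (age' := fun i => aoi ν i)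
    (q := fun i => 1 - μ (i + 1 : ℕ)) (g := 1 - x) (b := 1 - m) (c := x⁻¹)
    (sub_nonneg.2 hx) (sub_le_sub_left hmx 1) (inv_nonneg.2 hx₀.le) (by field_simp; ring)
    (fun i => ⟨sub_le_sub_left (hμ _).2 1, sub_le_sub_left (hμ _).1 1⟩)
    (aoi_add_one hm (fun s => (hμ s).1) (fun s => (hμ s).2.trans hx) ·) (fun i => ?_)
    (aoi_congr hpast) (inv_le_aoi hm (fun s => (hμ s).1) (fun s => (hμ s).2) hx 0)
  simp only [ne_eq, sub_right_inj]
  rw [← apply_ite (1 - ·), ← hpacked i]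
  exact aoi_add_one hm (fun s => (hν s).1) (fun s => (hν s).2.trans hx) i

end AgeOfInformation

theorem sum_Icc_one_eq_sum_range {M : Type*} [AddCommMonoid M] (f : ℤ → M) (N : ℕ) :
    ∑ t ∈ Finset.Icc (1 : ℤ) N, f t = ∑ i ∈ Finset.range N, f (i + 1 : ℕ) := by
  simp [Int.Icc_eq_finset_map, add_comm]

/-- (Lemma 5, rearrangement to Schedule B.) Fix `0 < μ_min ≤ μ* ≤ 1`, let `μ`
be a schedule, `T ≥ 1`, and let `n` be the number of slots in `{1,…,T}` in
which a sub-optimal channel is used. Schedule B keeps `μ` on slots `s ≤ 0`,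
uses the worst channel `μ_min` in slots `1` to `n`, and the optimal channel
`μ*` thereafter. Then `∑_{t=1}^{T} A_μ(t) ≤ ∑_{t=1}^{T} A_{μ_B}(t)`. -/
theorem stmt_8 (μmin μstar : ℝ) (hμmin_pos : 0 < μmin) (hμ_le : μmin ≤ μstar)
    (hμstar_le : μstar ≤ 1)
    (μ : ℤ → ℝ) (hμ : ∀ s : ℤ, μmin ≤ μ s ∧ μ s ≤ μstar)
    (T : ℤ) (hT : 1 ≤ T)
    (n : ℕ) (hn : n = ((Finset.Icc (1 : ℤ) T).filter (fun t => μ t ≠ μstar)).card)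
    (μB : ℤ → ℝ)
    (hB : ∀ s : ℤ, μB s = if s ≤ 0 then μ s else if s ≤ (n : ℤ) then μmin else μstar) :
    ∑ t ∈ Finset.Icc (1 : ℤ) T, aoi μ t ≤ ∑ t ∈ Finset.Icc (1 : ℤ) T, aoi μB t := by
  lift T to ℕ using by omega with N
  have hn_count : n = Nat.count (fun j => μ (j + 1 : ℕ) ≠ μstar) N := by
    rw [hn, Finset.card_filter, sum_Icc_one_eq_sum_range, ← Finset.card_filter,
      Nat.count_eq_card_filter_range]
  have past (s : ℤ) (hs : s ≤ 0) : μB s = μ s := by rw [hB, if_pos hs]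
  have packed (i : ℕ) : μB (i + 1 : ℕ) = if i < n then μmin else μstar := by
    simp only [hB, if_neg (show ¬((i + 1 : ℕ) : ℤ) ≤ 0 by omega), Nat.cast_le, Nat.succ_le_iff]
  subst hn_count
  rw [sum_Icc_one_eq_sum_range, sum_Icc_one_eq_sum_range]
  exact sum_range_aoi_le_sum_range_aoi_packed hμmin_pos hμ hμstar_le past packed
end

section
/- (Lemma 'expectedAgeBound_forQ' of the paper, deterministic-schedule form.) Fix reals μ_min and μ* with 0 < μ_min ≤ μ* ≤ 1, let μ : ℤ → ℝ be a schedule (μ_min ≤ μ(s) ≤ μ* for all s), and let L, T be integers with 1 ≤ L ≤ T. Let B = #{t ∈ {L+1, …, T} : μ(s) ≠ μ* for some s ∈ {t−L+1, …, t}} be the number of slots after L that are not preceded by L consecutive uses (up to and including slot t) of the optimal channel. Then ∑_{t=1}^{T} A_μ(t) ≤ L/μ_min + (T−L)/μ* + (T−L)(1−μ*)^{L}/μ_min + B/μ_min. -/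
open scoped Classical

/-!
Write `A` for the expected age, `q` for the success probability of the reference channel and `p`
for a lower bound of all success probabilities. The `n`-th term of the series `A t` is the
probability that the last `n` updates all failed. It is at most `(1 - p) ^ n`, so `A t ≤ 1 / p`
always. Cutting the series after `L` terms gives the renewal identity
`A t = ∑ n < L, (n-th term) + (L-th term) * A (t - L)`; if the last `L` slots all used the
reference channel, the finite sum is a partial geometric series and
`A t ≤ 1 / q + (1 - q) ^ L / p`. The crude bound `1 / p` is needed only on the first `L` slots and
on the `B` slots whose window leaves the reference channel.
-/

/-- The probability that the `n` updates attempted in the slots `t - n + 1, …, t` all fail. -/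
noncomputable def failProb (μ : ℤ → ℝ) (t : ℤ) (n : ℕ) : ℝ :=
  ∏ i ∈ Finset.range n, (1 - μ (t - (i : ℤ)))

theorem aoi_eq_tsum_failProb (μ : ℤ → ℝ) (t : ℤ) : aoi μ t = ∑' n, failProb μ t n :=
  rfl

theorem failProb_add (μ : ℤ → ℝ) (t : ℤ) (m n : ℕ) :
    failProb μ t (m + n) = failProb μ t m * failProb μ (t - m) n := by
  simp only [failProb, Finset.prod_range_add, Nat.cast_add, sub_sub]

theorem failProb_eq_pow {μ : ℤ → ℝ} {q : ℝ} {t : ℤ} {n : ℕ}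
    (hwindow : ∀ s ∈ Finset.Icc (t - n + 1) t, μ s = q) : failProb μ t n = (1 - q) ^ n := by
  have hfactor : ∀ i ∈ Finset.range n, 1 - μ (t - i) = 1 - q := fun i hi ↦ by
    rw [hwindow _ (Finset.mem_Icc.2 (by grind))]
  rw [failProb, Finset.prod_congr rfl hfactor, Finset.prod_const, Finset.card_range]

theorem aoi_eq_sum_failProb_add {μ : ℤ → ℝ} {t : ℤ} (hsum : Summable (failProb μ t)) (m : ℕ) :
    aoi μ t = ∑ n ∈ Finset.range m, failProb μ t n + failProb μ t m * aoi μ (t - m) := by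
  simp only [aoi_eq_tsum_failProb, ← hsum.sum_add_tsum_nat_add m, ← tsum_mul_left,
    add_comm _ m, failProb_add]

theorem sum_one_sub_pow_le_inv {q : ℝ} (hq : 0 < q) (hq_le : q ≤ 1) (m : ℕ) :
    ∑ n ∈ Finset.range m, (1 - q) ^ n ≤ q⁻¹ := by
  have hnonneg : 0 ≤ 1 - q := sub_nonneg.2 hq_le
  have hlt : 1 - q < 1 := sub_lt_self 1 hq
  calc ∑ n ∈ Finset.range m, (1 - q) ^ n
      ≤ ∑' n, (1 - q) ^ n :=
        (summable_geometric_of_lt_one hnonneg hlt).sum_le_tsum _ fun n _ ↦ pow_nonneg hnonneg n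
    _ = q⁻¹ := by rw [tsum_geometric_of_lt_one hnonneg hlt, sub_sub_cancel]

section BoundedSchedule

variable {μ : ℤ → ℝ} {p q : ℝ}

theorem failProb_nonneg (hμ : ∀ s, μ s ≤ 1) (t : ℤ) (n : ℕ) : 0 ≤ failProb μ t n :=
  Finset.prod_nonneg fun _ _ ↦ sub_nonneg.2 (hμ _)

theorem failProb_le_pow (hμ : ∀ s, p ≤ μ s ∧ μ s ≤ 1) (t : ℤ) (n : ℕ) :
    failProb μ t n ≤ (1 - p) ^ n :=
  calc failProb μ t n
      ≤ ∏ _i ∈ Finset.range n, (1 - p) :=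
        Finset.prod_le_prod (fun _ _ ↦ sub_nonneg.2 (hμ _).2)
          fun _ _ ↦ sub_le_sub_left (hμ _).1 1
    _ = (1 - p) ^ n := by rw [Finset.prod_const, Finset.card_range]

theorem summable_failProb (hp : 0 < p) (hμ : ∀ s, p ≤ μ s ∧ μ s ≤ 1) (t : ℤ) :
    Summable (failProb μ t) :=
  .of_nonneg_of_le (failProb_nonneg (fun s ↦ (hμ s).2) t) (failProb_le_pow hμ t)
    (summable_geometric_of_lt_one (sub_nonneg.2 ((hμ 0).1.trans (hμ 0).2)) (sub_lt_self 1 hp))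

theorem aoi_le_inv (hp : 0 < p) (hμ : ∀ s, p ≤ μ s ∧ μ s ≤ 1) (t : ℤ) : aoi μ t ≤ p⁻¹ :=
  (summable_failProb hp hμ t).tsum_le_of_sum_range_le fun m ↦
    (Finset.sum_le_sum fun n _ ↦ failProb_le_pow hμ t n).trans
      (sum_one_sub_pow_le_inv hp ((hμ 0).1.trans (hμ 0).2) m)

theorem aoi_le_of_forall_window_eq (hp : 0 < p) (hμ : ∀ s, p ≤ μ s ∧ μ s ≤ 1)
    (hq : 0 < q) (hq_le : q ≤ 1) {t : ℤ} {L : ℕ}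
    (hwindow : ∀ s ∈ Finset.Icc (t - L + 1) t, μ s = q) :
    aoi μ t ≤ q⁻¹ + (1 - q) ^ L * p⁻¹ := by
  have hpow : ∀ n ≤ L, failProb μ t n = (1 - q) ^ n := fun n hn ↦
    failProb_eq_pow fun s hs ↦ hwindow s (Finset.Icc_subset_Icc_left (by lia) hs)
  calc aoi μ t
      = ∑ n ∈ Finset.range L, failProb μ t n + failProb μ t L * aoi μ (t - L) :=
        aoi_eq_sum_failProb_add (summable_failProb hp hμ t) L
    _ = ∑ n ∈ Finset.range L, (1 - q) ^ n + (1 - q) ^ L * aoi μ (t - L) := by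
        rw [hpow L le_rfl,
          Finset.sum_congr rfl fun n hn ↦ hpow n (Finset.mem_range.1 hn).le]
    _ ≤ q⁻¹ + (1 - q) ^ L * p⁻¹ :=
        add_le_add (sum_one_sub_pow_le_inv hq hq_le L)
          (mul_le_mul_of_nonneg_left (aoi_le_inv hp hμ _) (pow_nonneg (sub_nonneg.2 hq_le) L))

theorem sum_aoi_le_card_mul_inv (hp : 0 < p) (hμ : ∀ s, p ≤ μ s ∧ μ s ≤ 1) (S : Finset ℤ) :
    ∑ t ∈ S, aoi μ t ≤ S.card * p⁻¹ :=
  (S.sum_le_card_nsmul _ _ fun t _ ↦ aoi_le_inv hp hμ t).trans_eq (nsmul_eq_mul _ _)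

theorem sum_aoi_le_of_forall_window_eq (hp : 0 < p) (hμ : ∀ s, p ≤ μ s ∧ μ s ≤ 1)
    (hq : 0 < q) (hq_le : q ≤ 1) {L : ℕ} {S : Finset ℤ}
    (hwindow : ∀ t ∈ S, ∀ s ∈ Finset.Icc (t - L + 1) t, μ s = q) :
    ∑ t ∈ S, aoi μ t ≤ S.card * (q⁻¹ + (1 - q) ^ L * p⁻¹) :=
  (S.sum_le_card_nsmul _ _ fun t ht ↦
    aoi_le_of_forall_window_eq hp hμ hq hq_le (hwindow t ht)).trans_eq (nsmul_eq_mul _ _)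

theorem sum_aoi_le_of_forall_sdiff_window_eq (hp : 0 < p) (hμ : ∀ s, p ≤ μ s ∧ μ s ≤ 1)
    (hq : 0 < q) (hq_le : q ≤ 1) {L : ℕ} {E S : Finset ℤ} (hES : E ⊆ S)
    (hwindow : ∀ t ∈ S \ E, ∀ s ∈ Finset.Icc (t - L + 1) t, μ s = q) :
    ∑ t ∈ S, aoi μ t ≤ S.card * (q⁻¹ + (1 - q) ^ L * p⁻¹) + E.card * p⁻¹ := by
  have hbound_nonneg : 0 ≤ q⁻¹ + (1 - q) ^ L * p⁻¹ :=
    add_nonneg (inv_nonneg.2 hq.le)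
      (mul_nonneg (pow_nonneg (sub_nonneg.2 hq_le) L) (inv_nonneg.2 hp.le))
  calc ∑ t ∈ S, aoi μ t
      = ∑ t ∈ S \ E, aoi μ t + ∑ t ∈ E, aoi μ t := (Finset.sum_sdiff hES).symm
    _ ≤ (S \ E).card * (q⁻¹ + (1 - q) ^ L * p⁻¹) + E.card * p⁻¹ :=
        add_le_add (sum_aoi_le_of_forall_window_eq hp hμ hq hq_le hwindow)
          (sum_aoi_le_card_mul_inv hp hμ E)
    _ ≤ S.card * (q⁻¹ + (1 - q) ^ L * p⁻¹) + E.card * p⁻¹ :=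
        add_le_add_left (mul_le_mul_of_nonneg_right
          (Nat.cast_le.2 (Finset.card_le_card Finset.sdiff_subset)) hbound_nonneg) _

end BoundedSchedule

theorem sum_Icc_add_one_consecutive {α M : Type*} [LinearOrder α] [LocallyFiniteOrder α] [One α]
    [Add α] [SuccAddOrder α] [NoMaxOrder α] [AddCommMonoid M] (f : α → M) {a b c : α}
    (hab : a ≤ b) (hbc : b ≤ c) :
    ∑ t ∈ Finset.Icc (a + 1) b, f t + ∑ t ∈ Finset.Icc (b + 1) c, f t =
      ∑ t ∈ Finset.Icc (a + 1) c, f t := by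
  simp only [Finset.Icc_add_one_left_eq_Ioc]
  rw [← Finset.Ioc_union_Ioc_eq_Ioc hab hbc,
    Finset.sum_union (Finset.Ioc_disjoint_Ioc_of_le le_rfl)]

theorem stmt_13_general {μmin q : ℝ} (hμmin_pos : 0 < μmin) (hq_pos : 0 < q) (hq_le : q ≤ 1)
    {μ : ℤ → ℝ} (hμ : ∀ s : ℤ, μmin ≤ μ s ∧ μ s ≤ 1) {L T : ℕ} (hLT : L ≤ T) {B : ℕ}
    (hB : B = ((Finset.Icc ((L : ℤ) + 1) (T : ℤ)).filter
        (fun t => ∃ s ∈ Finset.Icc (t - (L : ℤ) + 1) t, μ s ≠ q)).card) :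
    ∑ t ∈ Finset.Icc (1 : ℤ) (T : ℤ), aoi μ t ≤
      (L : ℝ) / μmin + ((T : ℝ) - L) / q +
        ((T : ℝ) - L) * (1 - q) ^ L / μmin + (B : ℝ) / μmin := by
  have hinitial : ∑ t ∈ Finset.Icc (1 : ℤ) L, aoi μ t ≤ L * μmin⁻¹ := by
    simpa using sum_aoi_le_card_mul_inv hμmin_pos hμ (Finset.Icc (1 : ℤ) L)
  have hcard : ((Finset.Icc ((L : ℤ) + 1) T).card : ℝ) = T - L := by
    rw [Int.card_Icc, ← Nat.cast_sub hLT]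
    congr 1
    lia
  have hlater : ∑ t ∈ Finset.Icc ((L : ℤ) + 1) T, aoi μ t ≤
      (T - L) * (q⁻¹ + (1 - q) ^ L * μmin⁻¹) + B * μmin⁻¹ := by
    -- The filter in `hB` carries `Classical.propDecidable`, not the instance found by search.
    rw [← hcard, hB, Finset.filter_congr_decidable]
    refine sum_aoi_le_of_forall_sdiff_window_eq hμmin_pos hμ hq_pos hq_le
      (Finset.filter_subset _ _) fun t ht s hs ↦ ?_
    by_contra hne
    obtain ⟨ht_mem, ht_notMem⟩ := Finset.mem_sdiff.1 ht
    exact ht_notMem (Finset.mem_filter.2 ⟨ht_mem, s, hs, hne⟩)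
  calc ∑ t ∈ Finset.Icc (1 : ℤ) T, aoi μ t
      = ∑ t ∈ Finset.Icc (1 : ℤ) L, aoi μ t + ∑ t ∈ Finset.Icc ((L : ℤ) + 1) T, aoi μ t :=
        (sum_Icc_add_one_consecutive (a := 0) (aoi μ) (by lia) (by lia)).symm
    _ ≤ L * μmin⁻¹ + ((T - L) * (q⁻¹ + (1 - q) ^ L * μmin⁻¹) + B * μmin⁻¹) :=
        add_le_add hinitial hlater
    _ = L / μmin + (T - L) / q + (T - L) * (1 - q) ^ L / μmin + B / μmin := by ring

/-- (Lemma 'expectedAgeBound_forQ', deterministic-schedule form.)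
Fix `0 < μ_min ≤ μ* ≤ 1`, let `μ` be a schedule, and let `1 ≤ L ≤ T`.
Let `B` be the number of slots `t ∈ {L+1,…,T}` such that `μ(s) ≠ μ*` for some
`s ∈ {t−L+1,…,t}` (slots not preceded by `L` consecutive uses, up to and
including slot `t`, of the optimal channel). Then
`∑_{t=1}^{T} A_μ(t) ≤ L/μ_min + (T−L)/μ* + (T−L)(1−μ*)^L/μ_min + B/μ_min`. -/
theorem stmt_13 (μmin μstar : ℝ) (hμmin_pos : 0 < μmin) (hμ_le : μmin ≤ μstar)
    (hμstar_le : μstar ≤ 1)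
    (μ : ℤ → ℝ) (hμ : ∀ s : ℤ, μmin ≤ μ s ∧ μ s ≤ μstar)
    (L T : ℕ) (hL : 1 ≤ L) (hLT : L ≤ T)
    (B : ℕ)
    (hB : B = ((Finset.Icc ((L : ℤ) + 1) (T : ℤ)).filter
        (fun t => ∃ s ∈ Finset.Icc (t - (L : ℤ) + 1) t, μ s ≠ μstar)).card) :
    ∑ t ∈ Finset.Icc (1 : ℤ) (T : ℤ), aoi μ t ≤
      (L : ℝ) / μmin + ((T : ℝ) - L) / μstar +
        ((T : ℝ) - L) * (1 - μstar) ^ L / μmin + (B : ℝ) / μmin :=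
  stmt_13_general hμmin_pos (hμmin_pos.trans_le hμ_le) hμstar_le
    (fun s ↦ ⟨(hμ s).1, (hμ s).2.trans hμstar_le⟩) hLT hB
end
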